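/- There exists a constant C > 0 such that for every real ε > 0 and every positive integer k with πεk ≤ 73/100, writing K_j = K_j(πεk), the normal Stokes slender-body PDE eigenvalue λⁿ = 2π²εk·(4K₁²K₂ + πεk·K₁·(K₁² − K₀K₂)) / (2K₀K₁K₂ + πεk·(K₁²(K₀ + K₂) − 2K₀²K₂)) and the normal slender-body approximation eigenvalue λ^{SB,n} = 8π/(1 − 2·log(πεk/2) − 2γ) satisfy |λⁿ − λ^{SB,n}| ≤ C·ε²·k². -/

import Mathlib

open Real

/-- Modified Bessel function of the second kind of order `j`:
`K_j(z) = ∫₀^∞ exp (−z cosh t) * cosh (j t) dt`. -/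
noncomputable def besselK (j : ℕ) (z : ℝ) : ℝ :=
  ∫ t in Set.Ioi (0 : ℝ), Real.exp (-z * Real.cosh t) * Real.cosh ((j : ℝ) * t)

/-!
Write `z = π ε k`, `p = K₀(z)`, `g = z K₁(z)` and `L = -log (z / 2) - γ`. The recurrence
`z (K₂ - K₀) = 2 K₁` turns `λⁿ / 2π` into `N / D` with `N` and `D` polynomials in `z`, `p`, `g` and
`D` positive, while `λ^{SB,n} / 2π = 4 / (1 + 2 L)`. Up to `O(z² (1 + p)²)`, the cross difference
`N (1 + 2 L) - 4 D` is `16 g² (g L - p)`. Both `p - L` and `1 - g` tend to `0` with `z`, and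
comparing their derivatives with that of `z² (1 + p)` shows that they are at most `z² (1 + p)`; so
the cross difference is `O(z² (1 + p)²)`. As `p` and `L` blow up at the same logarithmic rate,
`D (1 + 2 L)` is at least a multiple of `(1 + p)²` away from the zero of `1 + 2 L`.
That `γ` is the right constant in `L` comes from comparing `K₀(z)` with the exponential integral
`E₁(z / 2)`, the same integral with `exp t / 2` in place of `cosh t`.
-/

open MeasureTheory Set Filter Topology

section Calculus

lemma le_of_hasDerivAt_le_of_tendsto_nhdsGT {f f' g g' : ℝ → ℝ} {a b l : ℝ} (hab : a < b)
    (hf : ∀ x ∈ Ioc a b, HasDerivAt f (f' x) x) (hg : ∀ x ∈ Ioc a b, HasDerivAt g (g' x) x)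
    (hfg : ∀ x ∈ Ioc a b, f' x ≤ g' x) (hfl : Tendsto f (𝓝[>] a) (𝓝 l))
    (hgl : Tendsto g (𝓝[>] a) (𝓝 l)) : f b ≤ g b := by
  have hderiv : ∀ x ∈ Ioc a b, HasDerivAt (fun y => g y - f y) (g' x - f' x) x :=
    fun x hx => (hg x hx).sub (hf x hx)
  have hmono : MonotoneOn (fun y => g y - f y) (Ioc a b) :=
    monotoneOn_of_hasDerivWithinAt_nonneg (convex_Ioc a b)
      (fun x hx => (hderiv x hx).continuousAt.continuousWithinAt)
      (fun x hx => (hderiv x (interior_subset hx)).hasDerivWithinAt)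
      (fun x hx => sub_nonneg.2 (hfg x (interior_subset hx)))
  have hlim : Tendsto (fun y => g y - f y) (𝓝[>] a) (𝓝 0) := by
    simpa only [sub_self] using hgl.sub hfl
  refine sub_nonneg.1 (le_of_tendsto hlim ?_)
  filter_upwards [Ioc_mem_nhdsGT hab] with x hx
  exact hmono hx (right_mem_Ioc.2 hab) hx.2

lemma tendsto_sinh_atTop : Tendsto sinh atTop atTop :=
  tendsto_atTop_mono' atTop
    ((eventually_ge_atTop 0).mono fun _ ht => self_le_sinh_iff.2 ht) tendsto_id

lemma cosh_mul_cosh_eq (x y : ℝ) : cosh x * cosh y = (cosh (x + y) + cosh (y - x)) / 2 := by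
  rw [cosh_add, cosh_sub]; ring

lemma sinh_mul_sinh_eq (x y : ℝ) : sinh x * sinh y = (cosh (x + y) - cosh (y - x)) / 2 := by
  rw [cosh_add, cosh_sub]; ring

lemma abs_sinh_le_cosh (x : ℝ) : |sinh x| ≤ cosh x := by
  rw [abs_sinh, ← cosh_abs]
  exact (sinh_lt_cosh _).le

end Calculus

section BesselK

variable {z : ℝ}

lemma exp_neg_mul_cosh_mul_cosh_le (hz : 0 < z) (ν : ℝ) {t : ℝ} (ht : 0 ≤ t) :
    exp (-z * cosh t) * cosh (ν * t) ≤ exp ((|ν| + 1) ^ 2 / z) * exp (-t) := by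
  have hcosh_le : cosh (ν * t) ≤ exp (|ν| * t) := by
    rw [← cosh_abs, abs_mul, abs_of_nonneg ht, ← cosh_add_sinh]
    exact le_add_of_nonneg_right (sinh_nonneg_iff.2 (by positivity))
  have hle_cosh : t ^ 2 / 4 ≤ cosh t := by
    rw [cosh_eq]
    linarith [quadratic_le_exp_of_nonneg ht, exp_pos (-t)]
  -- complete the square in `t`
  have hsquare : (|ν| + 1) * t ≤ z * (t ^ 2 / 4) + (|ν| + 1) ^ 2 / z := by
    have hsq : z * (t ^ 2 / 4) + (|ν| + 1) ^ 2 / z - (|ν| + 1) * t =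
        (z * t / 2 - (|ν| + 1)) ^ 2 / z := by field_simp; ring
    exact sub_nonneg.1 (hsq ▸ by positivity)
  calc exp (-z * cosh t) * cosh (ν * t) ≤ exp (-z * (t ^ 2 / 4)) * exp (|ν| * t) := by
        gcongr ?_ * ?_
        exact exp_le_exp.2 (mul_le_mul_of_nonpos_left hle_cosh (neg_nonpos.2 hz.le))
    _ ≤ exp ((|ν| + 1) ^ 2 / z) * exp (-t) := by
        rw [← exp_add, ← exp_add]
        exact exp_le_exp.2 (by linarith)

lemma integrableOn_exp_neg_mul_cosh_mul_cosh (hz : 0 < z) (ν : ℝ) :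
    IntegrableOn (fun t => exp (-z * cosh t) * cosh (ν * t)) (Ioi 0) := by
  have hexp : IntegrableOn (fun t => exp ((|ν| + 1) ^ 2 / z) * exp (-t)) (Ioi 0) :=
    (integrableOn_exp_neg_Ioi 0).const_mul _
  refine hexp.mono' (by fun_prop) ?_
  filter_upwards [ae_restrict_mem measurableSet_Ioi] with t ht
  rw [norm_of_nonneg (mul_pos (exp_pos _) (cosh_pos _)).le]
  exact exp_neg_mul_cosh_mul_cosh_le hz ν (le_of_lt ht)

lemma integrableOn_exp_neg_mul_cosh (hz : 0 < z) :
    IntegrableOn (fun t => exp (-z * cosh t)) (Ioi 0) := by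
  simpa using integrableOn_exp_neg_mul_cosh_mul_cosh hz 0

lemma tendsto_exp_neg_mul_cosh_mul_cosh (hz : 0 < z) (ν : ℝ) :
    Tendsto (fun t => exp (-z * cosh t) * cosh (ν * t)) atTop (𝓝 0) := by
  have hexp := tendsto_exp_neg_atTop_nhds_zero.const_mul (exp ((|ν| + 1) ^ 2 / z))
  rw [mul_zero] at hexp
  refine squeeze_zero' (.of_forall fun t => (mul_pos (exp_pos _) (cosh_pos _)).le) ?_ hexp
  filter_upwards [eventually_ge_atTop 0] with t ht
  exact exp_neg_mul_cosh_mul_cosh_le hz ν ht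

lemma tendsto_exp_neg_mul_cosh_mul_sinh (hz : 0 < z) (ν : ℝ) :
    Tendsto (fun t => exp (-z * cosh t) * sinh (ν * t)) atTop (𝓝 0) := by
  refine squeeze_zero_norm (fun t => ?_) (tendsto_exp_neg_mul_cosh_mul_cosh hz ν)
  rw [norm_mul, norm_of_nonneg (exp_pos _).le, norm_eq_abs]
  gcongr
  exact abs_sinh_le_cosh _

lemma besselK_zero_apply (z : ℝ) : besselK 0 z = ∫ t in Ioi (0 : ℝ), exp (-z * cosh t) := by
  simp [besselK]

lemma besselK_zero_pos (hz : 0 < z) : 0 < besselK 0 z := by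
  rw [besselK_zero_apply]
  have : NeZero (volume.restrict (Ioi (0 : ℝ))) := ⟨by simp⟩
  exact integral_exp_pos (integrableOn_exp_neg_mul_cosh hz)

lemma monotone_besselK_order (hz : 0 < z) : Monotone fun j : ℕ => besselK j z := by
  intro i j hij
  refine setIntegral_mono_on (integrableOn_exp_neg_mul_cosh_mul_cosh hz i)
    (integrableOn_exp_neg_mul_cosh_mul_cosh hz j) measurableSet_Ioi fun t ht => ?_
  have ht : 0 < t := ht
  gcongr
  rw [cosh_le_cosh, abs_of_nonneg (by positivity), abs_of_nonneg (by positivity)]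
  gcongr

lemma mul_besselK_zero_le_mul_besselK_one (hz : 0 < z) : z * besselK 0 z ≤ z * besselK 1 z :=
  mul_le_mul_of_nonneg_left (monotone_besselK_order hz zero_le_one) hz.le

lemma antitoneOn_besselK (j : ℕ) : AntitoneOn (besselK j) (Ioi 0) := by
  intro x hx y hy hxy
  refine integral_mono (integrableOn_exp_neg_mul_cosh_mul_cosh hy j)
    (integrableOn_exp_neg_mul_cosh_mul_cosh hx j) fun t => ?_
  have := cosh_pos t
  have := cosh_pos (j * t)
  dsimp only
  gcongr

lemma mul_besselK_add_two_sub (j : ℕ) (hz : 0 < z) :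
    z * (besselK (j + 2) z - besselK j z) = 2 * (j + 1) * besselK (j + 1) z := by
  have hint := fun i : ℕ => integrableOn_exp_neg_mul_cosh_mul_cosh hz i
  have hderiv : ∀ t : ℝ, HasDerivAt (fun t => exp (-z * cosh t) * sinh ((j + 1 : ℕ) * t))
      ((j + 1) * (exp (-z * cosh t) * cosh ((j + 1 : ℕ) * t)) -
        z / 2 * (exp (-z * cosh t) * cosh ((j + 2 : ℕ) * t) -
          exp (-z * cosh t) * cosh (j * t))) t := by
    intro t
    refine (((hasDerivAt_cosh t).const_mul (-z)).exp.mul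
      ((hasDerivAt_id' t).const_mul ((j + 1 : ℕ) : ℝ)).sinh).congr_deriv ?_
    have hprod := sinh_mul_sinh_eq t ((j + 1 : ℕ) * t)
    push_cast at hprod ⊢
    rw [show (j + 2 : ℝ) * t = t + (j + 1) * t by ring, show (j : ℝ) * t = (j + 1) * t - t by ring]
    linear_combination -z * exp (-z * cosh t) * hprod
  have hmain : IntegrableOn (fun t => (j + 1) * (exp (-z * cosh t) * cosh ((j + 1 : ℕ) * t)))
      (Ioi 0) := (hint (j + 1)).const_mul _
  have hdiff : IntegrableOn (fun t => z / 2 * (exp (-z * cosh t) * cosh ((j + 2 : ℕ) * t) -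
      exp (-z * cosh t) * cosh (j * t))) (Ioi 0) := ((hint (j + 2)).sub (hint j)).const_mul _
  have hzero := integral_Ioi_of_hasDerivAt_of_tendsto' (fun t _ => hderiv t) (hmain.sub hdiff)
    (tendsto_exp_neg_mul_cosh_mul_sinh hz _)
  rw [integral_sub hmain hdiff, integral_const_mul, integral_const_mul,
    integral_sub (hint (j + 2)) (hint j), mul_zero, sinh_zero, mul_zero, sub_zero] at hzero
  unfold besselK
  linarith

lemma mul_besselK_two_sub (hz : 0 < z) : z * (besselK 2 z - besselK 0 z) = 2 * besselK 1 z := by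
  simpa using mul_besselK_add_two_sub 0 hz

lemma hasDerivAt_besselK (j : ℕ) (hz : 0 < z) :
    HasDerivAt (besselK j)
      (-∫ t in Ioi (0 : ℝ), exp (-z * cosh t) * (cosh t * cosh (j * t))) z := by
  have hbound : IntegrableOn (fun t => exp (-(z / 2) * cosh t) * (cosh t * cosh (j * t)))
      (Ioi 0) := by
    have hint := integrableOn_exp_neg_mul_cosh_mul_cosh (half_pos hz)
    refine IntegrableOn.congr_fun (((hint (1 + j)).add (hint (j - 1))).div_const 2)
      (fun t _ => ?_) measurableSet_Ioi
    simp only [Pi.add_apply, cosh_mul_cosh_eq, add_mul, sub_mul, one_mul]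
    ring
  rw [← integral_neg]
  refine (hasDerivAt_integral_of_dominated_loc_of_deriv_le
    (F := fun x t => exp (-x * cosh t) * cosh (j * t))
    (F' := fun x t => -(exp (-x * cosh t) * (cosh t * cosh (j * t))))
    (Ioi_mem_nhds (half_lt_self hz)) (.of_forall fun x => by fun_prop)
    (integrableOn_exp_neg_mul_cosh_mul_cosh hz j) (by fun_prop)
    (ae_of_all _ fun t x hx => ?_) hbound (ae_of_all _ fun t x _ => ?_)).2
  · have hx : z / 2 < x := hx
    have := cosh_pos t
    have := cosh_pos (j * t)
    rw [norm_neg, norm_of_nonneg (by positivity)]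
    gcongr
  · refine (((hasDerivAt_neg x).mul_const (cosh t)).exp.mul_const _).congr_deriv ?_
    ring

lemma hasDerivAt_besselK_zero (hz : 0 < z) : HasDerivAt (besselK 0) (-besselK 1 z) z := by
  simpa [besselK] using hasDerivAt_besselK 0 hz

lemma hasDerivAt_besselK_succ (j : ℕ) (hz : 0 < z) :
    HasDerivAt (besselK (j + 1)) (-((besselK (j + 2) z + besselK j z) / 2)) z := by
  have hint := fun i : ℕ => integrableOn_exp_neg_mul_cosh_mul_cosh hz i
  refine (hasDerivAt_besselK (j + 1) hz).congr_deriv (congrArg Neg.neg ?_)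
  unfold besselK
  rw [← integral_add (hint (j + 2)) (hint j), ← integral_div]
  refine integral_congr_ae (ae_of_all _ fun t => ?_)
  dsimp only
  rw [cosh_mul_cosh_eq, show t + (j + 1 : ℕ) * t = (j + 2 : ℕ) * t by push_cast; ring,
    show (j + 1 : ℕ) * t - t = j * t by push_cast; ring]
  ring

lemma hasDerivAt_mul_besselK_one (hz : 0 < z) :
    HasDerivAt (fun x => x * besselK 1 x) (-(z * besselK 0 z)) z := by
  refine ((hasDerivAt_id' z).mul (hasDerivAt_besselK_succ 0 hz)).congr_deriv ?_
  linear_combination -(1 / 2) * mul_besselK_two_sub hz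

lemma exp_neg_le_mul_besselK_one (hz : 0 < z) : exp (-z) ≤ z * besselK 1 z := by
  have hderiv : ∀ t ∈ Ici (0 : ℝ), HasDerivAt (fun t => -exp (-z * cosh t))
      (z * (exp (-z * cosh t) * sinh t)) t := fun t _ =>
    ((hasDerivAt_cosh t).const_mul (-z)).exp.neg.congr_deriv (by ring)
  have hnonneg : ∀ t ∈ Ioi (0 : ℝ), 0 ≤ z * (exp (-z * cosh t) * sinh t) := fun t ht => by
    have := sinh_nonneg_iff.2 (le_of_lt ht)
    positivity
  have hlim : Tendsto (fun t => -exp (-z * cosh t)) atTop (𝓝 0) := by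
    simpa using (tendsto_exp_neg_mul_cosh_mul_cosh hz 0).neg
  have hint : IntegrableOn (fun t => z * (exp (-z * cosh t) * cosh ((1 : ℕ) * t))) (Ioi 0) :=
    (integrableOn_exp_neg_mul_cosh_mul_cosh hz _).const_mul z
  calc exp (-z) = ∫ t in Ioi (0 : ℝ), z * (exp (-z * cosh t) * sinh t) := by
        rw [integral_Ioi_of_hasDerivAt_of_nonneg' hderiv hnonneg hlim]; simp
    _ ≤ ∫ t in Ioi (0 : ℝ), z * (exp (-z * cosh t) * cosh ((1 : ℕ) * t)) := by
        refine integral_mono (integrableOn_Ioi_deriv_of_nonneg' hderiv hnonneg hlim) hint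
          fun t => ?_
        simp only [Nat.cast_one, one_mul]
        gcongr
        exact (sinh_lt_cosh t).le
    _ = z * besselK 1 z := integral_const_mul _ _

lemma mul_besselK_one_le_one (hz : 0 < z) : z * besselK 1 z ≤ 1 := by
  -- lowering `cosh` to `sinh` in the exponent alone makes the integrand an exact derivative
  have hderiv : ∀ t ∈ Ici (0 : ℝ), HasDerivAt (fun t => -exp (-z * sinh t))
      (z * (exp (-z * sinh t) * cosh t)) t := fun t _ =>
    ((hasDerivAt_sinh t).const_mul (-z)).exp.neg.congr_deriv (by ring)
  have hnonneg : ∀ t ∈ Ioi (0 : ℝ), 0 ≤ z * (exp (-z * sinh t) * cosh t) := fun t _ => by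
    have := cosh_pos t
    positivity
  have hlim : Tendsto (fun t => -exp (-z * sinh t)) atTop (𝓝 0) := by
    simpa using (tendsto_exp_neg_atTop_nhds_zero.comp (tendsto_sinh_atTop.const_mul_atTop hz)).neg
  have hint : IntegrableOn (fun t => z * (exp (-z * cosh t) * cosh ((1 : ℕ) * t))) (Ioi 0) :=
    (integrableOn_exp_neg_mul_cosh_mul_cosh hz _).const_mul z
  calc z * besselK 1 z = ∫ t in Ioi (0 : ℝ), z * (exp (-z * cosh t) * cosh ((1 : ℕ) * t)) :=
        (integral_const_mul _ _).symm
    _ ≤ ∫ t in Ioi (0 : ℝ), z * (exp (-z * sinh t) * cosh t) := by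
        refine integral_mono hint (integrableOn_Ioi_deriv_of_nonneg' hderiv hnonneg hlim)
          fun t => ?_
        have := cosh_pos t
        simp only [Nat.cast_one, one_mul]
        gcongr z * (exp ?_ * _)
        exact mul_le_mul_of_nonpos_left (sinh_lt_cosh t).le (neg_nonpos.2 hz.le)
    _ = 1 := by rw [integral_Ioi_of_hasDerivAt_of_nonneg' hderiv hnonneg hlim]; simp

end BesselK

section ExponentialIntegral

lemma integral_log_mul_exp_neg_Ioi_zero :
    ∫ s in Ioi (0 : ℝ), log s * exp (-s) = -eulerMascheroniConstant := by
  have hGamma : Complex.Gamma =ᶠ[𝓝 1] Complex.GammaIntegral := by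
    filter_upwards [(isOpen_lt continuous_const Complex.continuous_re).mem_nhds
      (show (0 : ℝ) < (1 : ℂ).re by simp)] with s hs using Complex.Gamma_eq_integral hs
  have hderiv := ((Complex.hasDerivAt_GammaIntegral (s := 1) (by simp)).congr_of_eventuallyEq
    hGamma).unique Complex.hasDerivAt_Gamma_one
  simp only [sub_self, Complex.cpow_zero, one_mul] at hderiv
  rw [← Complex.ofReal_inj, ← integral_complex_ofReal]
  push_cast at hderiv ⊢
  simpa using hderiv

lemma integrableOn_log_mul_exp_neg_Ioi_zero :
    IntegrableOn (fun s => log s * exp (-s)) (Ioi 0) := by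
  -- a non-integrable function has Bochner integral `0`, and here the integral is `-γ ≠ 0`
  refine Integrable.of_integral_ne_zero ?_
  rw [integral_log_mul_exp_neg_Ioi_zero]
  linarith [one_half_lt_eulerMascheroniConstant]

/-- The exponential integral `E₁(x) = ∫ₓ^∞ e⁻ˢ / s ds`, which carries the logarithmic singularity
of `K₀`. -/
noncomputable def expIntegralOne (x : ℝ) : ℝ := ∫ s in Ioi x, exp (-s) / s

variable {x : ℝ}

lemma integrableOn_exp_neg_div (hx : 0 < x) : IntegrableOn (fun s => exp (-s) / s) (Ioi x) := by
  have hexp : IntegrableOn (fun s => exp (-s) / x) (Ioi x) :=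
    (integrableOn_exp_neg_Ioi x).div_const x
  refine hexp.mono' (Measurable.aestronglyMeasurable (by fun_prop)) ?_
  filter_upwards [ae_restrict_mem measurableSet_Ioi] with s hs
  have hs : x < s := hs
  have : 0 < s := hx.trans hs
  rw [norm_of_nonneg (by positivity)]
  gcongr

lemma expIntegralOne_eq_integral_log (hx : 0 < x) :
    expIntegralOne x = (∫ s in Ioi x, log s * exp (-s)) - log x * exp (-x) := by
  have hlog : IntegrableOn (fun s => log s * exp (-s)) (Ioi x) :=
    integrableOn_log_mul_exp_neg_Ioi_zero.mono_set (Ioi_subset_Ioi hx.le)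
  have hderiv : ∀ s ∈ Ici x, HasDerivAt (fun s => log s * exp (-s))
      (exp (-s) / s - log s * exp (-s)) s := fun s hs =>
    ((hasDerivAt_log (hx.trans_le hs).ne').mul (hasDerivAt_neg s).exp).congr_deriv (by ring)
  have hlim : Tendsto (fun s => log s * exp (-s)) atTop (𝓝 0) := by
    refine squeeze_zero' ?_ ?_ (by simpa using tendsto_pow_mul_exp_neg_atTop_nhds_zero 1)
    · filter_upwards [eventually_ge_atTop 1] with s hs
      exact mul_nonneg (log_nonneg hs) (exp_pos _).le
    · filter_upwards [eventually_gt_atTop 0] with s hs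
      gcongr
      exact log_le_self hs.le
  have hparts := integral_Ioi_of_hasDerivAt_of_tendsto' hderiv
    ((integrableOn_exp_neg_div hx).sub hlog) hlim
  rw [integral_sub (integrableOn_exp_neg_div hx) hlog] at hparts
  unfold expIntegralOne
  linarith

lemma integrableOn_exp_neg_mul_exp (hx : 0 < x) :
    IntegrableOn (fun t => exp (-x * exp t)) (Ici 0) := by
  have hexp : IntegrableOn (fun t => exp (-x * t)) (Ici 0) :=
    (integrableOn_Ici_iff_integrableOn_Ioi (by simp)).2 (exp_neg_integrableOn_Ioi 0 hx)
  refine hexp.mono' (by fun_prop) (ae_of_all _ fun t => ?_)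
  rw [norm_of_nonneg (exp_pos _).le]
  exact exp_le_exp.2 (mul_le_mul_of_nonpos_left (by linarith [add_one_le_exp t]) (by linarith))

lemma integral_exp_neg_mul_exp (hx : 0 < x) :
    ∫ t in Ioi (0 : ℝ), exp (-x * exp t) = expIntegralOne x := by
  have hsubst : ∀ t, ((fun s => exp (-s) / s) ∘ fun t => x * exp t) t * (x * exp t) =
      exp (-x * exp t) := fun t => by
    simp only [Function.comp_apply, neg_mul]
    exact div_mul_cancel₀ _ (by positivity)
  have himage : (fun t => x * exp t) '' Ici 0 ⊆ Ici x := by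
    rintro _ ⟨t, ht, rfl⟩
    exact le_mul_of_one_le_right hx.le (one_le_exp ht)
  have hchange := integral_comp_mul_deriv_Ioi (g := fun s => exp (-s) / s) (a := 0)
    (f := fun t => x * exp t) (by fun_prop) (tendsto_exp_atTop.const_mul_atTop hx)
    (fun t _ => ((hasDerivAt_exp t).const_mul x).hasDerivWithinAt)
    (by
      refine ContinuousOn.div (by fun_prop) continuousOn_id fun s hs => ?_
      exact (hx.trans_le (himage (image_mono Ioi_subset_Ici_self hs))).ne')
    (((integrableOn_Ici_iff_integrableOn_Ioi (by simp)).2 (integrableOn_exp_neg_div hx)).mono_set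
      himage)
    (by simpa only [hsubst] using integrableOn_exp_neg_mul_exp hx)
  simpa only [hsubst, exp_zero, mul_one, expIntegralOne] using hchange

lemma tendsto_expIntegralOne_add_log :
    Tendsto (fun x => expIntegralOne x + log x) (𝓝[>] 0) (𝓝 (-eulerMascheroniConstant)) := by
  have hcover : AECover (volume.restrict (Ioi (0 : ℝ))) (𝓝[>] 0) fun x : ℝ => Ioi x :=
    aecover_Ioi_of_Ioi (tendsto_nhdsWithin_of_tendsto_nhds tendsto_id)
  have hint := hcover.integral_tendsto_of_countably_generated integrableOn_log_mul_exp_neg_Ioi_zero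
  rw [integral_log_mul_exp_neg_Ioi_zero] at hint
  have hlog : Tendsto (fun x => log x * (1 - exp (-x))) (𝓝[>] 0) (𝓝 0) := by
    have hxlog := (tendsto_log_mul_rpow_nhdsGT_zero one_pos).norm
    simp only [rpow_one, norm_zero] at hxlog
    refine squeeze_zero_norm' ?_ hxlog
    filter_upwards [self_mem_nhdsWithin] with x hx
    have hx : 0 < x := hx
    rw [norm_mul, norm_mul]
    gcongr
    rw [norm_of_nonneg (by simpa using hx.le), norm_of_nonneg hx.le]
    linarith [add_one_le_exp (-x)]
  refine (add_zero (-eulerMascheroniConstant) ▸ hint.add hlog).congr' ?_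
  filter_upwards [self_mem_nhdsWithin] with x hx
  rw [expIntegralOne_eq_integral_log hx, Measure.restrict_restrict measurableSet_Ioi,
    inter_eq_left.2 (Ioi_subset_Ioi (le_of_lt hx))]
  ring

end ExponentialIntegral

section SmallArgument

variable {z : ℝ}

/-- The logarithmic leading term `-log (z / 2) - γ` of `K₀(z)` as `z → 0⁺`. -/
noncomputable def besselKZeroLog (z : ℝ) : ℝ := -log (z / 2) - eulerMascheroniConstant

lemma hasDerivAt_besselKZeroLog (hz : z ≠ 0) : HasDerivAt besselKZeroLog (-z⁻¹) z := by
  refine ((((hasDerivAt_id' z).div_const 2).log (by simpa)).neg.sub_const _).congr_deriv ?_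
  field_simp

lemma abs_besselK_zero_sub_expIntegralOne_le (hz : 0 < z) :
    |besselK 0 z - expIntegralOne (z / 2)| ≤ z / 2 := by
  have hE := (integrableOn_exp_neg_mul_exp (half_pos hz)).mono_set Ioi_subset_Ici_self
  have hbound : IntegrableOn (fun t => z / 2 * exp (-t)) (Ioi 0) :=
    (integrableOn_exp_neg_Ioi 0).const_mul _
  rw [besselK_zero_apply, ← integral_exp_neg_mul_exp (half_pos hz),
    ← integral_sub (integrableOn_exp_neg_mul_cosh hz) hE, ← norm_eq_abs]
  refine (norm_integral_le_of_norm_le hbound (ae_of_all _ fun t => ?_)).trans_eq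
    (by rw [integral_const_mul, integral_exp_neg_Ioi_zero, mul_one])
  have hfactor : exp (-z * cosh t) - exp (-(z / 2) * exp t) =
      -(exp (-(z / 2) * exp t) * (1 - exp (-(z / 2 * exp (-t))))) := by
    have hsplit : exp (-z * cosh t) = exp (-(z / 2) * exp t) * exp (-(z / 2 * exp (-t))) := by
      rw [← exp_add, cosh_eq]; ring_nf
    rw [hsplit]; ring
  have hle_one : exp (-(z / 2) * exp t) ≤ 1 :=
    exp_le_one_iff.2 (mul_nonpos_of_nonpos_of_nonneg (by linarith) (exp_pos t).le)
  have hsub_nonneg : 0 ≤ 1 - exp (-(z / 2 * exp (-t))) :=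
    sub_nonneg.2 (exp_le_one_iff.2 (neg_nonpos.2 (by positivity)))
  rw [hfactor, norm_neg, norm_of_nonneg (mul_nonneg (exp_pos _).le hsub_nonneg)]
  refine (mul_le_of_le_one_left hsub_nonneg hle_one).trans ?_
  linarith [add_one_le_exp (-(z / 2 * exp (-t)))]

lemma tendsto_besselK_zero_sub_log :
    Tendsto (fun z => besselK 0 z - besselKZeroLog z) (𝓝[>] 0) (𝓝 0) := by
  have hhalf : Tendsto (fun z : ℝ => z / 2) (𝓝[>] 0) (𝓝[>] 0) :=
    tendsto_nhdsWithin_iff.2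
      ⟨tendsto_nhdsWithin_of_tendsto_nhds (Continuous.tendsto' (by fun_prop) 0 0 (zero_div 2)),
        eventually_nhdsWithin_of_forall fun _ hz => mem_Ioi.2 (half_pos hz)⟩
  have hdiff : Tendsto (fun z => besselK 0 z - expIntegralOne (z / 2)) (𝓝[>] 0) (𝓝 0) :=
    squeeze_zero_norm' (eventually_nhdsWithin_of_forall fun _ hz =>
      abs_besselK_zero_sub_expIntegralOne_le hz) (tendsto_nhds_of_tendsto_nhdsWithin hhalf)
  have hlog := (tendsto_expIntegralOne_add_log.comp hhalf).add_const eulerMascheroniConstant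
  have hsum := hdiff.add hlog
  rw [neg_add_cancel, add_zero] at hsum
  refine hsum.congr fun z => ?_
  simp only [Function.comp_apply, besselKZeroLog]
  ring

lemma tendsto_mul_besselK_one : Tendsto (fun z => z * besselK 1 z) (𝓝[>] 0) (𝓝 1) := by
  have hexp : Tendsto (fun z => exp (-z)) (𝓝[>] 0) (𝓝 1) :=
    tendsto_nhdsWithin_of_tendsto_nhds (Continuous.tendsto' (by fun_prop) 0 1 (by simp))
  exact tendsto_of_tendsto_of_tendsto_of_le_of_le' hexp tendsto_const_nhds
    (eventually_nhdsWithin_of_forall fun _ hz => exp_neg_le_mul_besselK_one hz)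
    (eventually_nhdsWithin_of_forall fun _ hz => mul_besselK_one_le_one hz)

lemma tendsto_sq_mul_one_add_besselK_zero :
    Tendsto (fun z => z ^ 2 * (1 + besselK 0 z)) (𝓝[>] 0) (𝓝 0) := by
  have hpoly : Tendsto (fun z : ℝ => z ^ 2 + z) (𝓝[>] 0) (𝓝 0) :=
    tendsto_nhdsWithin_of_tendsto_nhds (Continuous.tendsto' (by fun_prop) 0 0 (by simp))
  refine squeeze_zero' (eventually_nhdsWithin_of_forall fun z hz => ?_)
    (eventually_nhdsWithin_of_forall fun z hz => ?_) hpoly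
  · have := besselK_zero_pos hz
    positivity
  · have hz : 0 < z := hz
    have hle_one : z * besselK 0 z ≤ 1 :=
      (mul_besselK_zero_le_mul_besselK_one hz).trans (mul_besselK_one_le_one hz)
    linarith [mul_le_mul_of_nonneg_left hle_one hz.le]

lemma hasDerivAt_sq_mul_one_add_besselK_zero (hz : 0 < z) :
    HasDerivAt (fun x => x ^ 2 * (1 + besselK 0 x))
      (z * (2 * (1 + besselK 0 z) - z * besselK 1 z)) z := by
  refine ((hasDerivAt_pow 2 z).mul ((hasDerivAt_besselK_zero hz).const_add 1)).congr_deriv ?_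
  push_cast
  ring

lemma hasDerivAt_besselK_zero_sub_log (hz : 0 < z) :
    HasDerivAt (fun x => besselK 0 x - besselKZeroLog x) ((1 - z * besselK 1 z) / z) z := by
  refine ((hasDerivAt_besselK_zero hz).sub (hasDerivAt_besselKZeroLog hz.ne')).congr_deriv ?_
  field_simp
  ring

lemma one_sub_mul_besselK_one_le (hz : 0 < z) :
    1 - z * besselK 1 z ≤ z ^ 2 * (1 + besselK 0 z) := by
  refine le_of_hasDerivAt_le_of_tendsto_nhdsGT hz
    (fun x hx => (hasDerivAt_mul_besselK_one hx.1).const_sub 1)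
    (fun x hx => hasDerivAt_sq_mul_one_add_besselK_zero hx.1) (fun x hx => ?_)
    (by simpa using tendsto_mul_besselK_one.const_sub 1) tendsto_sq_mul_one_add_besselK_zero
  rw [neg_neg]
  refine mul_le_mul_of_nonneg_left ?_ hx.1.le
  linarith [mul_besselK_one_le_one hx.1, besselK_zero_pos hx.1]

lemma besselKZeroLog_le_besselK_zero (hz : 0 < z) : besselKZeroLog z ≤ besselK 0 z :=
  sub_nonneg.1 <| le_of_hasDerivAt_le_of_tendsto_nhdsGT hz (fun _ _ => hasDerivAt_const _ 0)
    (fun _ hx => hasDerivAt_besselK_zero_sub_log hx.1)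
    (fun _ hx => div_nonneg (sub_nonneg.2 (mul_besselK_one_le_one hx.1)) hx.1.le)
    tendsto_const_nhds tendsto_besselK_zero_sub_log

lemma besselK_zero_sub_log_le_self (hz : 0 < z) : besselK 0 z - besselKZeroLog z ≤ z := by
  refine le_of_hasDerivAt_le_of_tendsto_nhdsGT hz
    (fun x hx => hasDerivAt_besselK_zero_sub_log hx.1) (fun x _ => hasDerivAt_id' x)
    (fun x hx => ?_) tendsto_besselK_zero_sub_log
    (tendsto_nhdsWithin_of_tendsto_nhds tendsto_id)
  rw [div_le_one hx.1]
  linarith [exp_neg_le_mul_besselK_one hx.1, add_one_le_exp (-x)]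

lemma besselK_zero_sub_log_le (hz : 0 < z) :
    besselK 0 z - besselKZeroLog z ≤ z ^ 2 * (1 + besselK 0 z) := by
  refine le_of_hasDerivAt_le_of_tendsto_nhdsGT hz
    (fun x hx => hasDerivAt_besselK_zero_sub_log hx.1)
    (fun x hx => hasDerivAt_sq_mul_one_add_besselK_zero hx.1) (fun x hx => ?_)
    tendsto_besselK_zero_sub_log tendsto_sq_mul_one_add_besselK_zero
  have hx : 0 < x := hx.1
  have hK0 := besselK_zero_pos hx
  calc (1 - x * besselK 1 x) / x ≤ x ^ 2 * (1 + besselK 0 x) / x := by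
        gcongr
        exact one_sub_mul_besselK_one_le hx
    _ = x * (1 + besselK 0 x) := by field_simp
    _ ≤ x * (2 * (1 + besselK 0 x) - x * besselK 1 x) := by
        gcongr
        linarith [mul_besselK_one_le_one hx]

end SmallArgument

section Eigenvalues

/-- The normal eigenvalue `λⁿ` of the Stokes slender-body operator at radius `ε` and wave
number `k`; the wave number is allowed to be any real. -/
noncomputable def stokesNormalEigenvalue (ε k : ℝ) : ℝ :=
  2 * π ^ 2 * ε * k *
    ((4 * (besselK 1 (π * ε * k)) ^ 2 * besselK 2 (π * ε * k) +
        π * ε * k * besselK 1 (π * ε * k) *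
          ((besselK 1 (π * ε * k)) ^ 2 - besselK 0 (π * ε * k) * besselK 2 (π * ε * k))) /
      (2 * besselK 0 (π * ε * k) * besselK 1 (π * ε * k) * besselK 2 (π * ε * k) +
        π * ε * k *
          ((besselK 1 (π * ε * k)) ^ 2 * (besselK 0 (π * ε * k) + besselK 2 (π * ε * k)) -
            2 * (besselK 0 (π * ε * k)) ^ 2 * besselK 2 (π * ε * k))))

/-- The normal eigenvalue `λ^{SB,n}` of the Keller–Rubinow–Johnson approximation; it has a pole at
`π * ε * k = 2 * exp (1 / 2 - γ)`. -/
noncomputable def slenderBodyNormalEigenvalue (ε k : ℝ) : ℝ :=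
  8 * π / (1 - 2 * log (π * ε * k / 2) - 2 * eulerMascheroniConstant)

/-- The numerator of `λⁿ / 2π` in the variables `p = K₀(z)` and `g = z K₁(z)`, once `K₂` is
eliminated by `z² K₂ = z² p + 2 g` and powers of `z` are cleared. -/
def stokesNormalNum (z p g : ℝ) : ℝ :=
  8 * g ^ 3 + z ^ 2 * (g * (2 * g * p + g ^ 2 - z ^ 2 * p ^ 2))

/-- The denominator of `λⁿ / 2π` that goes with `stokesNormalNum`, arranged to be visibly positive
where `z * p ≤ g`. -/
def stokesNormalDen (z p g : ℝ) : ℝ :=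
  4 * p * g ^ 2 + 2 * (g ^ 2 - z ^ 2 * p ^ 2) * (z ^ 2 * p + g)

variable {ε k z p g L b : ℝ}

lemma stokesNormalEigenvalue_eq (hz : 0 < π * ε * k) :
    stokesNormalEigenvalue ε k = 2 * π *
      (stokesNormalNum (π * ε * k) (besselK 0 (π * ε * k)) (π * ε * k * besselK 1 (π * ε * k)) /
        stokesNormalDen (π * ε * k) (besselK 0 (π * ε * k))
          (π * ε * k * besselK 1 (π * ε * k))) := by
  rw [stokesNormalEigenvalue, show 2 * π ^ 2 * ε * k = 2 * π * (π * ε * k) by ring, mul_assoc]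
  generalize π * ε * k = z at hz ⊢
  have hK2 : besselK 2 z = besselK 0 z + 2 * besselK 1 z / z := by
    field_simp
    linarith [mul_besselK_two_sub hz]
  congr 1
  rw [hK2, ← mul_div_assoc, ← mul_div_mul_left _ _ (pow_ne_zero 3 hz.ne')]
  congr 1
  · unfold stokesNormalNum; field_simp; ring
  · unfold stokesNormalDen; field_simp; ring

lemma slenderBodyNormalEigenvalue_eq (ε k : ℝ) :
    slenderBodyNormalEigenvalue ε k = 2 * π * (4 / (1 + 2 * besselKZeroLog (π * ε * k))) := by
  rw [slenderBodyNormalEigenvalue, besselKZeroLog, ← mul_div_assoc]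
  congr 1 <;> ring

lemma abs_mul_sub_le_of_sub_le {δ : ℝ} (hp : 0 ≤ p) (hg : g ≤ 1) (hL : 0 ≤ 1 + 2 * L)
    (hLp : L ≤ p) (hgδ : 1 - g ≤ δ) (hpδ : p - L ≤ δ) :
    |g * L - p| ≤ 2 * δ * (1 + p) := by
  have hδ : 0 ≤ δ := (sub_nonneg.2 hg).trans hgδ
  have hLabs : |L| ≤ 1 + p := abs_le.2 ⟨by linarith, by linarith⟩
  calc |g * L - p| = |(1 - g) * L + (p - L)| := by rw [← abs_neg]; ring_nf
    _ ≤ (1 - g) * |L| + (p - L) := by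
        refine (abs_add_le _ _).trans_eq ?_
        rw [abs_mul, abs_of_nonneg (sub_nonneg.2 hg), abs_of_nonneg (sub_nonneg.2 hLp)]
    _ ≤ δ * (1 + p) + δ * (1 + p) := by
        gcongr
        exact hpδ.trans (le_mul_of_one_le_right hδ (by linarith))
    _ = 2 * δ * (1 + p) := by ring

lemma abs_stokesNormal_remainder_le (hp : 0 ≤ p) (hg : 0 ≤ g) (hg1 : g ≤ 1)
    (hpg : z ^ 2 * p ^ 2 ≤ g ^ 2) (hL : 0 ≤ 1 + 2 * L) (hLp : L ≤ p) :
    |g * (2 * g * p + g ^ 2 - z ^ 2 * p ^ 2) * (1 + 2 * L) +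
      8 * (p ^ 2 * g + z ^ 2 * p ^ 3 - g ^ 2 * p)| ≤ 12 * (1 + p) ^ 2 := by
  have hgp : g * p ≤ p := mul_le_of_le_one_left hp hg1
  have hgp0 : 0 ≤ g * p := mul_nonneg hg hp
  have hg2 : g ^ 2 ≤ 1 := pow_le_one₀ hg hg1
  have hfst : |g * (2 * g * p + g ^ 2 - z ^ 2 * p ^ 2) * (1 + 2 * L)| ≤
      1 * (2 * (1 + p)) * (2 * (1 + p)) := by
    rw [abs_mul, abs_mul, abs_of_nonneg hg, abs_of_nonneg hL]
    gcongr
    · exact abs_le.2 ⟨by linarith, by linarith [mul_nonneg (sq_nonneg z) (sq_nonneg p)]⟩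
    · linarith
  have hsnd : |p ^ 2 * g + z ^ 2 * p ^ 3 - g ^ 2 * p| ≤ (1 + p) ^ 2 := by
    have hupper : z ^ 2 * p ^ 3 ≤ g ^ 2 * p := by
      linarith [mul_le_mul_of_nonneg_right hpg hp]
    have hpp : p ^ 2 * g ≤ p ^ 2 := mul_le_of_le_one_right (sq_nonneg p) hg1
    have hgp' : g ^ 2 * p ≤ p := mul_le_of_le_one_left hp hg2
    have : 0 ≤ p ^ 2 * g := by positivity
    have : 0 ≤ z ^ 2 * p ^ 3 := by positivity
    exact abs_le.2 ⟨by nlinarith, by nlinarith⟩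
  calc _ ≤ _ := abs_add_le _ _
    _ ≤ 1 * (2 * (1 + p)) * (2 * (1 + p)) + 8 * (1 + p) ^ 2 := by
        rw [abs_mul (8 : ℝ), abs_of_pos (by norm_num : (0 : ℝ) < 8)]
        gcongr
    _ = 12 * (1 + p) ^ 2 := by ring

lemma abs_stokesNormalNum_mul_sub_le (hz : 0 < z) (hL : 0 ≤ 1 + 2 * besselKZeroLog z) :
    |stokesNormalNum z (besselK 0 z) (z * besselK 1 z) * (1 + 2 * besselKZeroLog z) -
      4 * stokesNormalDen z (besselK 0 z) (z * besselK 1 z)| ≤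
      44 * z ^ 2 * (1 + besselK 0 z) ^ 2 := by
  have hp := (besselK_zero_pos hz).le
  have hpg := mul_besselK_zero_le_mul_besselK_one hz
  have hg1 := mul_besselK_one_le_one hz
  have hgδ := one_sub_mul_besselK_one_le hz
  have hLp := besselKZeroLog_le_besselK_zero hz
  have hpδ := besselK_zero_sub_log_le hz
  generalize besselK 0 z = p, z * besselK 1 z = g, besselKZeroLog z = L at *
  have hg : 0 ≤ g := (mul_nonneg hz.le hp).trans hpg
  have hpg2 : z ^ 2 * p ^ 2 ≤ g ^ 2 := by
    rw [← mul_pow]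
    exact pow_le_pow_left₀ (mul_nonneg hz.le hp) hpg 2
  have hlead := abs_mul_sub_le_of_sub_le hp hg1 hL hLp hgδ hpδ
  have hrem := abs_stokesNormal_remainder_le hp hg hg1 hpg2 hL hLp
  calc |stokesNormalNum z p g * (1 + 2 * L) - 4 * stokesNormalDen z p g|
      = |16 * g ^ 2 * (g * L - p) + z ^ 2 * (g * (2 * g * p + g ^ 2 - z ^ 2 * p ^ 2) *
          (1 + 2 * L) + 8 * (p ^ 2 * g + z ^ 2 * p ^ 3 - g ^ 2 * p))| := by
        unfold stokesNormalNum stokesNormalDen; ring_nf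
    _ ≤ 16 * g ^ 2 * |g * L - p| + z ^ 2 * |g * (2 * g * p + g ^ 2 - z ^ 2 * p ^ 2) *
          (1 + 2 * L) + 8 * (p ^ 2 * g + z ^ 2 * p ^ 3 - g ^ 2 * p)| := by
        refine (abs_add_le _ _).trans_eq ?_
        rw [abs_mul, abs_mul (z ^ 2), abs_of_nonneg (by positivity : 0 ≤ 16 * g ^ 2),
          abs_of_nonneg (sq_nonneg z)]
    _ ≤ 16 * 1 * (2 * (z ^ 2 * (1 + p)) * (1 + p)) + z ^ 2 * (12 * (1 + p) ^ 2) := by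
        gcongr
        exact pow_le_one₀ hg hg1
    _ = 44 * z ^ 2 * (1 + p) ^ 2 := by ring

lemma le_stokesNormalDen (hz : 0 < z) :
    4 * besselK 0 z * exp (-z) ^ 2 ≤ stokesNormalDen z (besselK 0 z) (z * besselK 1 z) := by
  have hp := besselK_zero_pos hz
  have hpg := mul_besselK_zero_le_mul_besselK_one hz
  have hexp := exp_neg_le_mul_besselK_one hz
  generalize besselK 0 z = p, z * besselK 1 z = g at *
  have hg : 0 ≤ g := (exp_pos _).le.trans hexp
  have hpg2 : 0 ≤ g ^ 2 - z ^ 2 * p ^ 2 := by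
    rw [← mul_pow]
    exact sub_nonneg.2 (pow_le_pow_left₀ (mul_nonneg hz.le hp.le) hpg 2)
  calc 4 * p * exp (-z) ^ 2 ≤ 4 * p * g ^ 2 := by gcongr
    _ ≤ stokesNormalDen z p g := le_add_of_nonneg_right (by positivity)

lemma exists_forall_le_one_add_two_mul_besselKZeroLog (hb : 0 < b)
    (hb' : b < 2 * exp (1 / 2 - eulerMascheroniConstant)) :
    ∃ η : ℝ, 0 < η ∧ ∀ z ∈ Ioc 0 b, η ≤ 1 + 2 * besselKZeroLog z := by
  refine ⟨1 + 2 * besselKZeroLog b, ?_, fun z hz => ?_⟩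
  · have hlog : log (b / 2) < 1 / 2 - eulerMascheroniConstant :=
      (log_lt_iff_lt_exp (half_pos hb)).2 (by linarith)
    unfold besselKZeroLog
    linarith
  · have hlog : log (z / 2) ≤ log (b / 2) :=
      log_le_log (half_pos hz.1) (by linarith [hz.2])
    unfold besselKZeroLog
    linarith

lemma exists_forall_mul_sq_le_stokesNormalDen_mul (hb : 0 < b)
    (hb' : b < 2 * exp (1 / 2 - eulerMascheroniConstant)) :
    ∃ c : ℝ, 0 < c ∧ ∀ z ∈ Ioc 0 b, c * (1 + besselK 0 z) ^ 2 ≤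
      stokesNormalDen z (besselK 0 z) (z * besselK 1 z) * (1 + 2 * besselKZeroLog z) := by
  obtain ⟨η, hη, hηL⟩ := exists_forall_le_one_add_two_mul_besselKZeroLog hb hb'
  have hq := besselK_zero_pos hb
  set q := besselK 0 b
  set A := (1 / 2 + b) / η + 1 / 2 with hA
  have hApos : 0 < A := by positivity
  refine ⟨4 * (q / (1 + q)) * exp (-b) ^ 2 * A⁻¹, by positivity, fun z hz => ?_⟩
  have hp := besselK_zero_pos hz.1
  have hqp : q / (1 + q) * (1 + besselK 0 z) ≤ besselK 0 z := by
    have hanti : q ≤ besselK 0 z := antitoneOn_besselK 0 hz.1 hb hz.2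
    rw [div_mul_eq_mul_div, div_le_iff₀ (by positivity)]
    linarith
  have hLW : A⁻¹ * (1 + besselK 0 z) ≤ 1 + 2 * besselKZeroLog z := by
    have hconst : 1 / 2 + b ≤ (1 / 2 + b) / η * (1 + 2 * besselKZeroLog z) := by
      rw [div_mul_eq_mul_div, le_div_iff₀ hη]
      exact mul_le_mul_of_nonneg_left (hηL z hz) (by positivity)
    rw [inv_mul_le_iff₀ hApos, hA]
    linarith [besselK_zero_sub_log_le_self hz.1, hz.2]
  calc 4 * (q / (1 + q)) * exp (-b) ^ 2 * A⁻¹ * (1 + besselK 0 z) ^ 2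
      = 4 * (q / (1 + q) * (1 + besselK 0 z)) * exp (-b) ^ 2 *
          (A⁻¹ * (1 + besselK 0 z)) := by ring
    _ ≤ 4 * besselK 0 z * exp (-z) ^ 2 * (1 + 2 * besselKZeroLog z) := by
        gcongr
        exact hz.2
    _ ≤ _ := mul_le_mul_of_nonneg_right (le_stokesNormalDen hz.1) (hη.le.trans (hηL z hz))

lemma exists_forall_abs_stokesNormal_div_sub_le (hb : 0 < b)
    (hb' : b < 2 * exp (1 / 2 - eulerMascheroniConstant)) :
    ∃ C : ℝ, 0 < C ∧ ∀ z ∈ Ioc 0 b,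
      |stokesNormalNum z (besselK 0 z) (z * besselK 1 z) /
          stokesNormalDen z (besselK 0 z) (z * besselK 1 z) -
        4 / (1 + 2 * besselKZeroLog z)| ≤ C * z ^ 2 := by
  obtain ⟨η, hη, hηL⟩ := exists_forall_le_one_add_two_mul_besselKZeroLog hb hb'
  obtain ⟨c, hc, hden⟩ := exists_forall_mul_sq_le_stokesNormalDen_mul hb hb'
  refine ⟨44 / c, by positivity, fun z hz => ?_⟩
  have hp := besselK_zero_pos hz.1
  have hLpos : 0 < 1 + 2 * besselKZeroLog z := hη.trans_le (hηL z hz)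
  have hDpos : 0 < stokesNormalDen z (besselK 0 z) (z * besselK 1 z) :=
    lt_of_lt_of_le (by positivity) (le_stokesNormalDen hz.1)
  rw [div_sub_div _ _ hDpos.ne' hLpos.ne', mul_comm _ (4 : ℝ), abs_div,
    abs_of_pos (mul_pos hDpos hLpos)]
  calc _ ≤ 44 * z ^ 2 * (1 + besselK 0 z) ^ 2 / (c * (1 + besselK 0 z) ^ 2) :=
        div_le_div₀ (by positivity) (abs_stokesNormalNum_mul_sub_le hz.1 hLpos.le) (by positivity)
          (hden z hz)
    _ = 44 / c * z ^ 2 := by field_simp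

lemma lt_two_mul_exp_half_sub_eulerMascheroniConstant :
    73 / 100 < 2 * exp (1 / 2 - eulerMascheroniConstant) := by
  linarith [add_one_le_exp (1 / 2 - eulerMascheroniConstant), eulerMascheroniConstant_lt_two_thirds]

theorem stokes_normal_eigenvalue_difference_general (hb : 0 < b)
    (hb' : b < 2 * exp (1 / 2 - eulerMascheroniConstant)) :
    ∃ C : ℝ, 0 < C ∧ ∀ ε k : ℝ, 0 < ε → 0 < k → π * ε * k ≤ b →
      |stokesNormalEigenvalue ε k - slenderBodyNormalEigenvalue ε k| ≤ C * ε ^ 2 * k ^ 2 := by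
  obtain ⟨C, hC, hbound⟩ := exists_forall_abs_stokesNormal_div_sub_le hb hb'
  refine ⟨2 * π * C * π ^ 2, by positivity, fun ε k hε hk hkb => ?_⟩
  have hz : 0 < π * ε * k := by positivity
  rw [stokesNormalEigenvalue_eq hz, slenderBodyNormalEigenvalue_eq, ← mul_sub, abs_mul,
    abs_of_pos two_pi_pos]
  calc _ ≤ 2 * π * (C * (π * ε * k) ^ 2) := by
        gcongr
        exact hbound _ ⟨hz, hkb⟩
    _ = 2 * π * C * π ^ 2 * ε ^ 2 * k ^ 2 := by ring

end Eigenvalues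

theorem stokes_normal_eigenvalue_difference :
    ∃ C : ℝ, 0 < C ∧ ∀ ε : ℝ, 0 < ε → ∀ k : ℕ, 1 ≤ k → π * ε * (k : ℝ) ≤ 73 / 100 →
      |2 * π ^ 2 * ε * (k : ℝ) *
            ((4 * (besselK 1 (π * ε * (k : ℝ))) ^ 2 * besselK 2 (π * ε * (k : ℝ)) +
                π * ε * (k : ℝ) * besselK 1 (π * ε * (k : ℝ)) *
                  ((besselK 1 (π * ε * (k : ℝ))) ^ 2 -
                    besselK 0 (π * ε * (k : ℝ)) * besselK 2 (π * ε * (k : ℝ)))) /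
              (2 * besselK 0 (π * ε * (k : ℝ)) * besselK 1 (π * ε * (k : ℝ)) *
                  besselK 2 (π * ε * (k : ℝ)) +
                π * ε * (k : ℝ) *
                  ((besselK 1 (π * ε * (k : ℝ))) ^ 2 *
                      (besselK 0 (π * ε * (k : ℝ)) + besselK 2 (π * ε * (k : ℝ))) -
                    2 * (besselK 0 (π * ε * (k : ℝ))) ^ 2 *
                      besselK 2 (π * ε * (k : ℝ))))) -
          8 * π /
            (1 - 2 * Real.log (π * ε * (k : ℝ) / 2) - 2 * Real.eulerMascheroniConstant)| ≤
        C * ε ^ 2 * (k : ℝ) ^ 2 := by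
  obtain ⟨C, hC, hbound⟩ := stokes_normal_eigenvalue_difference_general (by norm_num)
    lt_two_mul_exp_half_sub_eulerMascheroniConstant
  exact ⟨C, hC, fun ε hε k hk hkb => hbound ε k hε (by exact_mod_cast hk) hkb⟩
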